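/- Let n, t be integers with 1 ≤ t ≤ n−1. Suppose φ: 𝒢_n → 𝒢_n is a complete linear map satisfying: for all G ∈ 𝒢_n, α(φ(G)) = t if and only if α(G) = t. Then for all distinct i,j ∈ {1,...,n}, the graph φ(G_{ij}) has exactly one edge. -/

import Mathlib

/-- The independence number of a simple graph: the maximum cardinality of a set
of pairwise nonadjacent vertices. -/
noncomputable def indepNum {V : Type*} (G : SimpleGraph V) : ℕ :=
  sSup {k | ∃ s : Finset V, (∀ a ∈ s, ∀ b ∈ s, a ≠ b → ¬ G.Adj a b) ∧ s.card = k}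

/-- `G_{ij}`: the graph whose only edge is `(i, j)`. -/
def singleEdge {V : Type*} (i j : V) : SimpleGraph V :=
  SimpleGraph.fromEdgeSet {s(i, j)}

/-- A map on graphs is linear if it preserves unions. -/
def IsLinearMap' {V : Type*} (φ : SimpleGraph V → SimpleGraph V) : Prop :=
  ∀ G H : SimpleGraph V, φ (G ⊔ H) = φ G ⊔ φ H

/-- A complete linear map: a linear map sending the complete graph to itself. -/
def IsCompleteLinearMap {V : Type*} (φ : SimpleGraph V → SimpleGraph V) : Prop :=
  IsLinearMap' φ ∧ φ ⊤ = ⊤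

/-- A vertex permutation. -/
def IsVertexPermutation {V : Type*} (φ : SimpleGraph V → SimpleGraph V) : Prop :=
  ∃ σ : Equiv.Perm V, ∀ i j : V, i ≠ j → φ (singleEdge i j) = singleEdge (σ i) (σ j)

/-- An edge permutation. -/
def IsEdgePermutation {V : Type*} (φ : SimpleGraph V → SimpleGraph V) : Prop :=
  φ ⊤ = ⊤ ∧ ∀ i j : V, i ≠ j → ((φ (singleEdge i j)).edgeSet).ncard = 1

/-!
A set `S` is independent in `G` exactly when `G` lies below the complement `C S` of the complete
graph on `S`. If `φ` preserves unions and the existence of independent `k`-sets, choose for every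
`k`-set `S` an independent `k`-set `T S` of `φ (C S)`. Since `S` is the only independent `k`-set of
`C S`, the set `T S` is independent in `φ G` if and only if `S` is independent in `G`; hence `T`
permutes the `k`-sets and `φ` preserves the number of independent `k`-sets. All single edges have
the same number of these, and no other graph has that number: besides some edge `ab` it would
contain a second edge, lying in a `k`-set that does not contain both `a` and `b`.

Preserving `α = t` implies preserving `t ≤ α`, because every number from `α G` to `|V|` is the
independence number of a subgraph of `G` and every positive number up to `α G` that of a supergraph.
This allows `k = t` when `2 ≤ t`. A one-element set is independent in every graph, so for `t = 1`
one takes `k = 2` instead.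
-/

section IndependenceNumber

variable {V : Type*} {G H : SimpleGraph V} {S U : Finset V} {k t : ℕ}

theorem indepNum_eq_simpleGraph_indepNum (G : SimpleGraph V) : indepNum G = G.indepNum :=
  congrArg sSup <| Set.ext fun _ => exists_congr fun _ => (SimpleGraph.isNIndepSet_iff ..).symm

/-- The complement of the complete graph on `S`: the largest graph in which `S` is independent. -/
def complCompleteOn (S : Set V) : SimpleGraph V :=
  (⊤ : SimpleGraph V).deleteEdges S.sym2

theorem le_complCompleteOn_iff {S : Set V} : G ≤ complCompleteOn S ↔ G.IsIndepSet S := by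
  simp only [complCompleteOn, SimpleGraph.le_iff_adj, SimpleGraph.deleteEdges_adj,
    SimpleGraph.top_adj, Set.mk_mem_sym2_iff]
  exact ⟨fun h a ha b hb _ hab => (h a b hab).2 ⟨ha, hb⟩,
    fun h a b hab => ⟨hab.ne, fun ⟨ha, hb⟩ => h ha hb hab.ne hab⟩⟩

theorem isIndepSet_complCompleteOn (S : Set V) : (complCompleteOn S).IsIndepSet S :=
  le_complCompleteOn_iff.1 le_rfl

theorem isIndepSet_anti {S : Set V} (hGH : G ≤ H) (hS : H.IsIndepSet S) : G.IsIndepSet S :=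
  le_complCompleteOn_iff.1 (hGH.trans (le_complCompleteOn_iff.2 hS))

theorem subset_of_isIndepSet_complCompleteOn {S U : Set V} (hU : (complCompleteOn S).IsIndepSet U)
    (hU₂ : U.Nontrivial) : U ⊆ S := by
  intro a ha
  obtain ⟨b, hb, hba⟩ := hU₂.exists_ne a
  by_contra haS
  exact hU ha hb hba.symm (SimpleGraph.deleteEdges_adj.2 ⟨hba.symm, fun hab => haS hab.1⟩)

theorem eq_of_isNIndepSet_complCompleteOn (hk : 2 ≤ k) (hS : S.card = k)
    (hU : (complCompleteOn (S : Set V)).IsNIndepSet k U) : U = S := by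
  have hU₂ : (U : Set V).Nontrivial := Finset.one_lt_card_iff_nontrivial.1 (by have := hU.2; omega)
  exact Finset.eq_of_subset_of_card_le
    (Finset.coe_subset.1 (subset_of_isIndepSet_complCompleteOn hU.isIndepSet hU₂))
    (hS.trans hU.card_eq.symm).le

theorem ncard_indepSetSet_le_of_iso {W : Type*} [Finite W] {H : SimpleGraph W} (e : G ≃g H)
    (k : ℕ) : (G.indepSetSet k).ncard ≤ (H.indepSetSet k).ncard := by
  refine Set.ncard_le_ncard_of_injOn (Finset.map e.toEquiv.toEmbedding) ?_
    (Finset.map_injective _).injOn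
  intro S hS
  refine ⟨?_, (Finset.card_map _).trans hS.card_eq⟩
  rw [Finset.coe_map]
  rintro _ ⟨a, ha, rfl⟩ _ ⟨b, hb, rfl⟩ hab hadj
  exact hS.isIndepSet ha hb (ne_of_apply_ne _ hab) (e.map_adj_iff.1 hadj)

variable [Finite V]

theorem le_indepNum_iff : k ≤ G.indepNum ↔ ∃ S, G.IsNIndepSet k S := by
  refine ⟨fun hk => ?_, fun ⟨S, hS⟩ => hS.card_eq ▸ hS.isIndepSet.card_le_indepNum⟩
  obtain ⟨S, hS⟩ := G.exists_isNIndepSet_indepNum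
  obtain ⟨U, hUS, hU⟩ := Finset.exists_subset_card_eq (hk.trans_eq hS.card_eq.symm)
  exact ⟨U, hS.isIndepSet.mono (Finset.coe_subset.2 hUS), hU⟩

theorem indepSetFree_iff_indepNum_lt : G.IndepSetFree k ↔ G.indepNum < k := by
  rw [← not_le, le_indepNum_iff, not_exists, SimpleGraph.IndepSetFree]

theorem indepNum_anti (hGH : G ≤ H) : H.indepNum ≤ G.indepNum := by
  obtain ⟨S, hS⟩ := H.exists_isNIndepSet_indepNum
  exact le_indepNum_iff.2 ⟨S, isIndepSet_anti hGH hS.isIndepSet, hS.card_eq⟩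

theorem indepNum_pos [Nonempty V] (G : SimpleGraph V) : 0 < G.indepNum :=
  le_indepNum_iff.2 ⟨{Classical.arbitrary V}, by simp, Finset.card_singleton _⟩

theorem indepNum_complCompleteOn (hS : S.Nonempty) :
    (complCompleteOn (S : Set V)).indepNum = S.card := by
  refine le_antisymm ?_ (isIndepSet_complCompleteOn _).card_le_indepNum
  obtain ⟨U, hU, hUcard⟩ := (complCompleteOn (S : Set V)).exists_isNIndepSet_indepNum
  rw [← hUcard]
  obtain hU₂ | hU₂ := le_or_gt U.card 1
  · exact hU₂.trans hS.card_pos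
  · exact Finset.card_le_card (Finset.coe_subset.1
      (subset_of_isIndepSet_complCompleteOn hU (Finset.one_lt_card_iff_nontrivial.1 hU₂)))

theorem exists_ge_indepNum_eq (ht : 0 < t) (hG : t ≤ G.indepNum) : ∃ H ≥ G, H.indepNum = t := by
  obtain ⟨S, hS, rfl⟩ := le_indepNum_iff.1 hG
  exact ⟨complCompleteOn S, le_complCompleteOn_iff.2 hS,
    indepNum_complCompleteOn (Finset.card_pos.1 ht)⟩

theorem indepNum_deleteEdges_singleton_le (G : SimpleGraph V) (a b : V) :
    (G.deleteEdges {s(a, b)}).indepNum ≤ G.indepNum + 1 := by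
  classical
  obtain ⟨U, hU, hUcard⟩ := (G.deleteEdges {s(a, b)}).exists_isNIndepSet_indepNum
  have hUa : G.IsIndepSet (U.erase a : Set V) := by
    intro c hc d hd hcd hadj
    rw [Finset.mem_coe, Finset.mem_erase] at hc hd
    refine hU hc.2 hd.2 hcd (SimpleGraph.deleteEdges_adj.2 ⟨hadj, fun h => ?_⟩)
    obtain ⟨hca, -⟩ | ⟨-, hda⟩ := Sym2.eq_iff.1 h
    · exact hc.1 hca
    · exact hd.1 hda
  calc
    _ = U.card := hUcard.symm
    _ ≤ (U.erase a).card + 1 := Nat.le_add_of_sub_le Finset.pred_card_le_card_erase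
    _ ≤ G.indepNum + 1 := Nat.add_le_add_right hUa.card_le_indepNum 1

theorem exists_le_indepNum_eq (hG : G.indepNum ≤ t) (ht : t ≤ Nat.card V) :
    ∃ H ≤ G, H.indepNum = t := by
  obtain ⟨H, hHG, hH⟩ := (Set.toFinite {H : SimpleGraph V | H.indepNum ≤ t}).exists_le_minimal hG
  refine ⟨H, hHG, hH.prop.antisymm (not_lt.1 fun hlt => ?_)⟩
  obtain ⟨a, b, hab⟩ : ∃ a b, H.Adj a b := by
    rw [← SimpleGraph.ne_bot_iff_exists_adj]
    rintro rfl
    have := Fintype.ofFinite V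
    have hbot : (⊥ : SimpleGraph V).IsIndepSet (Finset.univ : Finset V) := fun _ _ _ _ _ => id
    have := hbot.card_le_indepNum
    rw [Finset.card_univ, ← Nat.card_eq_fintype_card] at this
    omega
  have hdel : (H.deleteEdges {s(a, b)}).indepNum ≤ t :=
    (indepNum_deleteEdges_singleton_le H a b).trans hlt
  have := hH.le_of_le hdel (H.deleteEdges_le _) hab
  simp [SimpleGraph.deleteEdges_adj] at this

end IndependenceNumber

section SingleEdge

variable {V : Type*} {H : SimpleGraph V} {a b c d : V} {k : ℕ}

theorem singleEdge_eq_edge (a b : V) : singleEdge a b = SimpleGraph.edge a b := rfl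

theorem nonempty_iso_edge_edge (hab : a ≠ b) (hcd : c ≠ d) :
    Nonempty (SimpleGraph.edge a b ≃g SimpleGraph.edge c d) := by
  obtain ⟨σ, rfl, rfl⟩ := MulAction.is_two_pretransitive_iff.1
    (Equiv.Perm.isMultiplyPretransitive V 2) hab hcd
  exact ⟨σ, by simp [SimpleGraph.edge_adj]⟩

theorem isIndepSet_edge_iff {S : Set V} (hab : a ≠ b) :
    (SimpleGraph.edge a b).IsIndepSet S ↔ ¬(a ∈ S ∧ b ∈ S) := by
  rw [← le_complCompleteOn_iff, SimpleGraph.edge_le_iff]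
  simp [complCompleteOn, hab]

variable [Finite V]

theorem ncard_indepSetSet_edge_eq (hab : a ≠ b) (hcd : c ≠ d) (k : ℕ) :
    ((SimpleGraph.edge a b).indepSetSet k).ncard = ((SimpleGraph.edge c d).indepSetSet k).ncard :=
  let ⟨e⟩ := nonempty_iso_edge_edge hab hcd
  (ncard_indepSetSet_le_of_iso e k).antisymm (ncard_indepSetSet_le_of_iso e.symm k)

-- `max 3` admits `k = 2` on every `V`, since two different pairs already occupy three vertices.
theorem exists_card_eq_pair_mem_not_pair_mem (hk : 2 ≤ k) (hkV : k < max 3 (Nat.card V))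
    (hab : a ≠ b) (hcd : c ≠ d) (hne : s(a, b) ≠ s(c, d)) :
    ∃ S : Finset V, S.card = k ∧ (c ∈ S ∧ d ∈ S) ∧ ¬(a ∈ S ∧ b ∈ S) := by
  classical
  have := Fintype.ofFinite V
  obtain ⟨x, hxab, hxcd⟩ : ∃ x ∈ s(a, b), x ∉ s(c, d) := by
    by_contra! h
    exact hne ((Sym2.mem_and_mem_iff hab).1 ⟨h a (by simp), h b (by simp)⟩).symm
  obtain ⟨hxc, hxd⟩ : x ≠ c ∧ x ≠ d := by simpa using hxcd
  have hV : ({x, c, d} : Finset V).card ≤ Nat.card V := by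
    rw [Nat.card_eq_fintype_card]
    exact Finset.card_le_univ _
  rw [Finset.card_eq_three.2 ⟨x, c, d, hxc, hxd, hcd, rfl⟩] at hV
  have hkx : k ≤ (Finset.univ.erase x).card := by
    rw [Finset.card_erase_of_mem (Finset.mem_univ x), Finset.card_univ, ← Nat.card_eq_fintype_card]
    omega
  obtain ⟨S, hcdS, hSx, hS⟩ := Finset.exists_subsuperset_card_eq
    (show {c, d} ⊆ Finset.univ.erase x by grind) (by rwa [Finset.card_pair hcd]) hkx
  have hxS : x ∉ S := fun h => Finset.notMem_erase x _ (hSx h)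
  refine ⟨S, hS, ⟨hcdS (by simp), hcdS (by simp)⟩, fun ⟨ha, hb⟩ => ?_⟩
  obtain rfl | rfl := Sym2.mem_iff.1 hxab
  · exact hxS ha
  · exact hxS hb

theorem ncard_indepSetSet_edge_lt_bot (hab : a ≠ b) (hk : 2 ≤ k) (hkV : k ≤ Nat.card V) :
    ((SimpleGraph.edge a b).indepSetSet k).ncard <
      ((⊥ : SimpleGraph V).indepSetSet k).ncard := by
  classical
  have := Fintype.ofFinite V
  obtain ⟨S, habS, hS⟩ := Finset.exists_superset_card_eq (n := k) (s := {a, b})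
    (by rwa [Finset.card_pair hab]) (by rwa [← Nat.card_eq_fintype_card])
  have hSbot : S ∈ (⊥ : SimpleGraph V).indepSetSet k := ⟨fun _ _ _ _ _ => id, hS⟩
  have hSedge : S ∉ (SimpleGraph.edge a b).indepSetSet k := fun h =>
    (isIndepSet_edge_iff hab).1 h.isIndepSet ⟨habS (by simp), habS (by simp)⟩
  have hsub : (SimpleGraph.edge a b).indepSetSet k ⊆ (⊥ : SimpleGraph V).indepSetSet k :=
    fun _ hU => ⟨isIndepSet_anti bot_le hU.isIndepSet, hU.card_eq⟩
  exact Set.ncard_lt_ncard (hsub.ssubset_of_mem_notMem hSbot hSedge)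

theorem eq_edge_of_indepSetSet_edge_subset (hk : 2 ≤ k) (hkV : k < max 3 (Nat.card V))
    (hab : H.Adj a b) (hsub : (SimpleGraph.edge a b).indepSetSet k ⊆ H.indepSetSet k) :
    H = SimpleGraph.edge a b := by
  refine le_antisymm (fun c d hcd => ?_) ((SimpleGraph.edge_le_iff _).2 (.inr hab))
  rw [SimpleGraph.adj_edge]
  refine ⟨by_contra fun hne => ?_, hcd.ne⟩
  obtain ⟨S, hS, ⟨hc, hd⟩, habS⟩ :=
    exists_card_eq_pair_mem_not_pair_mem hk hkV hab.ne hcd.ne hne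
  have hSH : H.IsNIndepSet k S := hsub ⟨(isIndepSet_edge_iff hab.ne).2 habS, hS⟩
  exact hSH.isIndepSet hc hd hcd.ne hcd

theorem exists_eq_edge_of_ncard_indepSetSet_eq (hk : 2 ≤ k) (hkV : k < max 3 (Nat.card V))
    (hcd : c ≠ d)
    (hcard : (H.indepSetSet k).ncard = ((SimpleGraph.edge c d).indepSetSet k).ncard) :
    ∃ a b, a ≠ b ∧ H = SimpleGraph.edge a b := by
  obtain ⟨a, b, hab⟩ : ∃ a b, H.Adj a b := by
    rw [← SimpleGraph.ne_bot_iff_exists_adj]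
    rintro rfl
    have : Nontrivial V := ⟨c, d, hcd⟩
    have hV : 1 < Nat.card V := Finite.one_lt_card
    exact (ncard_indepSetSet_edge_lt_bot hcd hk (by omega)).ne' hcard
  have hsub : H.indepSetSet k ⊆ (SimpleGraph.edge a b).indepSetSet k := fun S hS =>
    ⟨isIndepSet_anti ((SimpleGraph.edge_le_iff _).2 (.inr hab)) hS.isIndepSet, hS.card_eq⟩
  have heq := Set.eq_of_subset_of_ncard_le hsub
    (by rw [hcard, ncard_indepSetSet_edge_eq hab.ne hcd])
  exact ⟨a, b, hab.ne, eq_edge_of_indepSetSet_edge_subset hk hkV hab heq.ge⟩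

end SingleEdge

section LinearMap

variable {V : Type*} {φ : SimpleGraph V → SimpleGraph V} {k t : ℕ}

theorem IsLinearMap'.monotone (hφ : IsLinearMap' φ) : Monotone φ := fun G H hGH => by
  rw [← sup_eq_right.2 hGH, hφ]
  exact le_sup_left

theorem isIndepSet_apply_iff (hφ : IsLinearMap' φ) (hk : 2 ≤ k)
    (hfree : ∀ G, (φ G).IndepSetFree k ↔ G.IndepSetFree k) {S U : Finset V} (hS : S.card = k)
    (hU : (φ (complCompleteOn (S : Set V))).IsNIndepSet k U) (G : SimpleGraph V) :
    (φ G).IsIndepSet (U : Set V) ↔ G.IsIndepSet (S : Set V) := by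
  refine ⟨fun hGU => ?_, fun hGS =>
    isIndepSet_anti (hφ.monotone (le_complCompleteOn_iff.2 hGS)) hU.isIndepSet⟩
  have hsup : (φ (complCompleteOn (S : Set V) ⊔ G)).IsNIndepSet k U := by
    refine ⟨?_, hU.card_eq⟩
    rw [hφ, ← le_complCompleteOn_iff]
    exact sup_le (le_complCompleteOn_iff.2 hU.isIndepSet) (le_complCompleteOn_iff.2 hGU)
  obtain ⟨W, hW, hWcard⟩ : ∃ W, (complCompleteOn (S : Set V) ⊔ G).IsNIndepSet k W := by
    simpa [SimpleGraph.IndepSetFree] using (hfree _).not.1 fun h => h _ hsup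
  obtain rfl : W = S :=
    eq_of_isNIndepSet_complCompleteOn hk hS ⟨isIndepSet_anti le_sup_left hW, hWcard⟩
  exact isIndepSet_anti le_sup_right hW

variable [Finite V]

theorem exists_perm_forall_isIndepSet_apply_iff (hφ : IsLinearMap' φ) (hk : 2 ≤ k)
    (hfree : ∀ G, (φ G).IndepSetFree k ↔ G.IndepSetFree k) :
    ∃ T : Equiv.Perm {S : Finset V // S.card = k}, ∀ (G : SimpleGraph V) S,
      (φ G).IsIndepSet (T S : Finset V) ↔ G.IsIndepSet (S : Finset V) := by
  have exists_indep : ∀ S : {S : Finset V // S.card = k},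
      ∃ U, (φ (complCompleteOn (S : Finset V))).IsNIndepSet k U := fun S => by
    have hS : ¬(complCompleteOn (S : Set V)).IndepSetFree k := fun h =>
      h S ⟨isIndepSet_complCompleteOn _, S.2⟩
    simpa [SimpleGraph.IndepSetFree] using (hfree _).not.2 hS
  choose U hU using exists_indep
  have hU_iff := fun G S => isIndepSet_apply_iff hφ hk hfree S.2 (hU S) G
  let T : {S : Finset V // S.card = k} → {S : Finset V // S.card = k} :=
    fun S => ⟨U S, (hU S).card_eq⟩
  have hT : Function.Injective T := fun S S' hSS' => by
    have hUS : U S = U S' := congrArg Subtype.val hSS'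
    have hS := (hU S').isIndepSet
    rw [← hUS, hU_iff] at hS
    exact Subtype.ext (eq_of_isNIndepSet_complCompleteOn hk S'.2 ⟨hS, S.2⟩)
  exact ⟨Equiv.ofBijective T (Finite.injective_iff_bijective.1 hT), hU_iff⟩

theorem ncard_indepSetSet_apply_eq (hφ : IsLinearMap' φ) (hk : 2 ≤ k)
    (hfree : ∀ G, (φ G).IndepSetFree k ↔ G.IndepSetFree k) (G : SimpleGraph V) :
    ((φ G).indepSetSet k).ncard = (G.indepSetSet k).ncard := by
  obtain ⟨T, hT⟩ := exists_perm_forall_isIndepSet_apply_iff hφ hk hfree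
  symm
  refine Set.ncard_congr (fun S hS => T ⟨S, hS.card_eq⟩) ?_ ?_ ?_
  · exact fun S hS => ⟨(hT G ⟨S, hS.card_eq⟩).2 hS.isIndepSet, (T _).2⟩
  · exact fun S S' _ _ h => congrArg Subtype.val (T.injective (Subtype.ext h))
  · intro U hU
    obtain ⟨S, hS⟩ := T.surjective ⟨U, hU.card_eq⟩
    have hSU : (T S : Finset V) = U := congrArg Subtype.val hS
    exact ⟨S, ⟨(hT G S).1 (hSU ▸ hU.isIndepSet), S.2⟩, hSU⟩

theorem le_indepNum_apply_iff (hφ : Monotone φ) (ht : 0 < t) (htV : t ≤ Nat.card V)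
    (hpres : ∀ G, (φ G).indepNum = t ↔ G.indepNum = t) (G : SimpleGraph V) :
    t ≤ (φ G).indepNum ↔ t ≤ G.indepNum := by
  constructor
  · intro hφG
    by_contra! hG
    obtain ⟨H, hHG, hH⟩ := exists_le_indepNum_eq hG.le htV
    have hφG' : (φ G).indepNum ≤ t := ((hpres H).2 hH) ▸ indepNum_anti (hφ hHG)
    exact hG.ne ((hpres G).1 (hφG'.antisymm hφG))
  · intro hG
    obtain ⟨H, hGH, hH⟩ := exists_ge_indepNum_eq ht hG
    exact ((hpres H).2 hH).ge.trans (indepNum_anti (hφ hGH))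

theorem indepSetFree_max_two_apply_iff (hφ : Monotone φ) (ht : 0 < t) (htV : t ≤ Nat.card V)
    (hpres : ∀ G, (φ G).indepNum = t ↔ G.indepNum = t) (G : SimpleGraph V) :
    (φ G).IndepSetFree (max 2 t) ↔ G.IndepSetFree (max 2 t) := by
  simp only [indepSetFree_iff_indepNum_lt]
  have : Nonempty V := (Nat.card_pos_iff.1 (ht.trans_le htV)).1
  have hG := indepNum_pos G
  have hφG := indepNum_pos (φ G)
  have heq := hpres G
  have hle := le_indepNum_apply_iff hφ ht htV hpres G
  omega

end LinearMap

theorem stmt8_general {V : Type*} [Finite V] {t : ℕ} (ht : 0 < t) (htV : t < Nat.card V)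
    {φ : SimpleGraph V → SimpleGraph V} (hφ : IsLinearMap' φ)
    (hpres : ∀ G : SimpleGraph V, indepNum (φ G) = t ↔ indepNum G = t) {i j : V} (hij : i ≠ j) :
    ((φ (singleEdge i j)).edgeSet).ncard = 1 := by
  simp only [indepNum_eq_simpleGraph_indepNum] at hpres
  have hfree := indepSetFree_max_two_apply_iff hφ.monotone ht htV.le hpres
  have hk : 2 ≤ max 2 t := le_max_left 2 t
  have hkV : max 2 t < max 3 (Nat.card V) := by omega
  obtain ⟨a, b, hab, hφij⟩ := exists_eq_edge_of_ncard_indepSetSet_eq hk hkV hij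
    (ncard_indepSetSet_apply_eq hφ hk hfree (SimpleGraph.edge i j))
  rw [singleEdge_eq_edge, hφij, SimpleGraph.edgeSet_edge_of_ne hab, Set.ncard_singleton]

theorem stmt8 (n t : ℕ) (ht : 1 ≤ t) (htn : t ≤ n - 1)
    (φ : SimpleGraph (Fin n) → SimpleGraph (Fin n)) (hφ : IsCompleteLinearMap φ)
    (hpres : ∀ G : SimpleGraph (Fin n), indepNum (φ G) = t ↔ indepNum G = t) :
    ∀ i j : Fin n, i ≠ j → ((φ (singleEdge i j)).edgeSet).ncard = 1 := by
  have htn' : t < Nat.card (Fin n) := by rw [Nat.card_fin]; omega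
  exact fun _ _ => stmt8_general ht htn' hφ.1 hpres
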